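/- Let x ∈ ℝ² have irrational slope ξ with ω(ξ) < ∞, and let y ∈ ℝ² \ {0} have rational slope (or y₂ = 0). Then μ(x,y) = ω(ξ)/(ω(ξ)+1) and μ̂(x,y) = 1/(ω(ξ)+1). -/

import Mathlib

open Matrix MeasureTheory

/-- Denominator `q k` of the `k`-th convergent of the continued fraction of `ξ`. -/
noncomputable def qden (ξ : ℝ) (k : ℕ) : ℝ := (GenContFract.of ξ).dens k

/-- Numerator `p k` of the `k`-th convergent of the continued fraction of `ξ`. -/
noncomputable def pnum (ξ : ℝ) (k : ℕ) : ℝ := (GenContFract.of ξ).nums k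

/-- Action of an integer matrix on `ℝ²` by left multiplication. -/
noncomputable def act (g : Matrix (Fin 2) (Fin 2) ℤ) (x : Fin 2 → ℝ) : Fin 2 → ℝ :=
  (g.map (Int.cast : ℤ → ℝ)).mulVec x

/-- Sup norm of an integer `2 × 2` matrix. -/
noncomputable def mnorm (g : Matrix (Fin 2) (Fin 2) ℤ) : ℝ :=
  max (max |(g 0 0 : ℝ)| |(g 0 1 : ℝ)|) (max |(g 1 0 : ℝ)| |(g 1 1 : ℝ)|)

/-- Sup norm on `ℝ²`. -/
noncomputable def vnorm (v : Fin 2 → ℝ) : ℝ := max |v 0| |v 1|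

/-- The set of exponents `w` such that `|v α + u| ≤ |v| ^ (-w)` has infinitely many
integer solutions `(v, u)`; its supremum is the irrationality measure `ω(α)`. -/
def omegaSet (α : ℝ) : Set ℝ :=
  {w : ℝ | {p : ℤ × ℤ | |(p.1 : ℝ) * α + (p.2 : ℝ)| ≤ |(p.1 : ℝ)| ^ (-w)}.Infinite}

/-- The set of exponents `μ` such that `|γ x - y| ≤ |γ| ^ (-μ)` for infinitely many
`γ ∈ SL(2, ℤ)`; its supremum is `μ(x, y)`. -/
def muSet (x y : Fin 2 → ℝ) : Set ℝ :=
  {μ : ℝ | {γ : Matrix (Fin 2) (Fin 2) ℤ |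
    γ.det = 1 ∧ vnorm (act γ x - y) ≤ mnorm γ ^ (-μ)}.Infinite}

/-- The set of exponents `μ` such that for all sufficiently large `T` there is
`γ ∈ SL(2, ℤ)` with `|γ| ≤ T` and `|γ x - y| ≤ T ^ (-μ)`; its supremum is `μ̂(x, y)`. -/
def muHatSet (x y : Fin 2 → ℝ) : Set ℝ :=
  {μ : ℝ | ∃ T₀ : ℝ, ∀ T : ℝ, T₀ ≤ T → ∃ γ : Matrix (Fin 2) (Fin 2) ℤ,
    γ.det = 1 ∧ mnorm γ ≤ T ∧ vnorm (act γ x - y) ≤ T ^ (-μ)}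

/-!
Write `ξ` for the slope of `x` and `e = |γ x - y|`. If `y = t P (1, 0)` with `P ∈ SL(2, ℤ)`, the
bottom row `(c, d)` of `P⁻¹ γ` satisfies `|c ξ + d| ≪ e` and, because the determinant is `1`,
`|c| ≪ |γ| |c ξ + d|`. Conversely every coprime pair `(c, d)` is the bottom row of some `P⁻¹ γ`
with `e ≪ |c ξ + d|` and `|γ| ≪ |c| / |c ξ + d|`. So approximating `y` by the orbit of `x` is the
same problem as approximating `0` by `c ξ + d`, with `|c|` replaced by `|c| / |c ξ + d|`; this
change of height turns the exponent `ω` into `ω / (ω + 1)`, and for the uniform exponent it turns a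
good rational approximation of `ξ` into a long gap without good approximations of `y`.
-/

open Filter Topology
open scoped MatrixGroups

section Asymptotics

lemma exists_pos_forall_le_of_finite {α : Type*} {S : Set α} (hS : S.Finite) {f : α → ℝ}
    (hf : ∀ a ∈ S, 0 < f a) : ∃ K > 0, ∀ a ∈ S, K ≤ f a := by
  rcases S.eq_empty_or_nonempty with rfl | hne
  · exact ⟨1, one_pos, by simp⟩
  · obtain ⟨a, ha, hmin⟩ := Set.exists_min_image S f hS hne
    exact ⟨f a, hf a ha, hmin⟩

lemma eventually_mul_rpow_neg_lt (C : ℝ) {K θ : ℝ} (hK : 0 < K) (hθ : 0 < θ) :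
    ∀ᶠ T : ℝ in atTop, C * T ^ (-θ) < K := by
  have h := (tendsto_rpow_neg_atTop hθ).const_mul C
  rw [mul_zero] at h
  exact h.eventually_lt_const hK

lemma eventually_mul_rpow_neg_le_rpow_neg (C : ℝ) {μ ν : ℝ} (h : μ < ν) :
    ∀ᶠ T : ℝ in atTop, C * T ^ (-ν) ≤ T ^ (-μ) := by
  filter_upwards [eventually_mul_rpow_neg_lt C one_pos (sub_pos.mpr h), eventually_gt_atTop 0]
    with T hT hT0
  calc C * T ^ (-ν) = C * T ^ (-(ν - μ)) * T ^ (-μ) := by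
        rw [mul_assoc, ← Real.rpow_add hT0]
        ring_nf
    _ ≤ 1 * T ^ (-μ) := by gcongr
    _ = T ^ (-μ) := one_mul _

lemma nonneg_of_frequently_le_mul_rpow {K C θ : ℝ} (hK : 0 < K)
    (h : ∃ᶠ T : ℝ in atTop, K ≤ C * T ^ θ) : 0 ≤ θ := by
  by_contra! hθ
  refine h ((eventually_mul_rpow_neg_lt C hK (neg_pos.mpr hθ)).mono fun T hT => ?_)
  rw [neg_neg] at hT
  exact hT.not_ge

lemma isLUB_of_tendsto_of_frequently {α ι : Type*} [LinearOrder α] [DenselyOrdered α]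
    [TopologicalSpace α] [OrderTopology α] {l : Filter ι} {f : ι → α} {A : Set α} {L : α}
    (hf : Tendsto f l (𝓝 L)) (hub : ∃ᶠ i in l, f i ∈ upperBounds A)
    (hlb : ∃ᶠ i in l, Set.Iio (f i) ⊆ A) : IsLUB A L := by
  refine ⟨fun a ha => ?_, fun b hb => le_of_forall_lt fun a ha => ?_⟩
  · by_contra! hlt
    obtain ⟨i, hi, hia⟩ := (hub.and_eventually (hf.eventually_lt_const hlt)).exists
    exact hia.not_ge (hi ha)
  · obtain ⟨i, hi, hai⟩ := (hlb.and_eventually (hf.eventually_const_lt ha)).exists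
    obtain ⟨c, hac, hci⟩ := exists_between hai
    exact hac.trans_le (hb (hi hci))

end Asymptotics

section LinearForm

variable {ξ : ℝ}

lemma finite_setOf_abs_le_and_abs_mul_add_le (ξ R B : ℝ) :
    {p : ℤ × ℤ | |(p.1 : ℝ)| ≤ R ∧ |(p.1 : ℝ) * ξ + p.2| ≤ B}.Finite := by
  refine ((Set.finite_Icc (-⌊R⌋) ⌊R⌋).prod
    (Set.finite_Icc (-⌊B + R * |ξ|⌋) ⌊B + R * |ξ|⌋)).subset ?_
  rintro ⟨c, d⟩ ⟨hc, hcd⟩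
  have hd : |(d : ℝ)| ≤ B + R * |ξ| :=
    calc |(d : ℝ)| = |(c * ξ + d) - c * ξ| := by ring_nf
      _ ≤ |c * ξ + d| + |(c : ℝ)| * |ξ| := by rw [← abs_mul]; exact abs_sub _ _
      _ ≤ B + R * |ξ| := by gcongr
  rw [← Int.cast_abs, ← Int.le_floor] at hc hd
  exact ⟨abs_le.mp hc, abs_le.mp hd⟩

lemma abs_intCast_mul_add_pos (hξ : Irrational ξ) {c d : ℤ} (hcd : (c, d) ≠ 0) :
    0 < |(c : ℝ) * ξ + d| := by
  rcases eq_or_ne c 0 with rfl | hc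
  · simpa using hcd
  · exact abs_pos.mpr ((hξ.intCast_mul hc).add_intCast d).ne_zero

lemma exists_pos_le_abs_intCast_mul_add (hξ : Irrational ξ) (M : ℝ) :
    ∃ K > 0, ∀ c d : ℤ, (c, d) ≠ 0 → |(c : ℝ)| ≤ M → K ≤ |(c : ℝ) * ξ + d| := by
  obtain ⟨K, hK, hle⟩ := exists_pos_forall_le_of_finite
    ((finite_setOf_abs_le_and_abs_mul_add_le ξ M 1).subset
      (Set.sep_subset _ fun p : ℤ × ℤ => p ≠ 0))
    (f := fun p => |(p.1 : ℝ) * ξ + p.2|) fun p hp => abs_intCast_mul_add_pos hξ hp.2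
  refine ⟨min K 1, by positivity, fun c d hcd hc => ?_⟩
  rcases le_total |(c : ℝ) * ξ + d| 1 with h | h
  · exact (min_le_left _ _).trans (hle (c, d) ⟨⟨hc, h⟩, hcd⟩)
  · exact (min_le_right _ _).trans h

lemma exists_isCoprime_abs_intCast_mul_add_le {v : ℤ} (hv : v ≠ 0) (u : ℤ) (ξ : ℝ) :
    ∃ c d : ℤ, IsCoprime c d ∧ c ≠ 0 ∧ |(c : ℝ)| ≤ |(v : ℝ)| ∧
      |(c : ℝ) * ξ + d| ≤ |(v : ℝ) * ξ + u| := by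
  have hpos : 0 < Int.gcd v u := Int.gcd_pos_of_ne_zero_left _ hv
  obtain ⟨c, d, hcd, hvc, hud⟩ := Int.exists_gcd_one hpos
  have hg : (1 : ℝ) ≤ Int.gcd v u := by exact_mod_cast hpos
  refine ⟨c, d, Int.isCoprime_iff_gcd_eq_one.mpr hcd, ?_, ?_, ?_⟩
  · rintro rfl
    exact hv (by rw [hvc, zero_mul])
  · rw [hvc, Int.cast_mul, abs_mul, Int.cast_natCast, Nat.abs_cast]
    exact le_mul_of_one_le_right (abs_nonneg _) hg
  · have hform : (v : ℝ) * ξ + u = (c * ξ + d) * Int.gcd v u := by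
      rw [add_mul, mul_right_comm]
      exact_mod_cast congrArg₂ (fun a b : ℤ => (a : ℝ) * ξ + b) hvc hud
    rw [hform, abs_mul, Nat.abs_cast]
    exact le_mul_of_one_le_right (abs_nonneg _) hg

lemma exists_isCoprime_abs_le_and_abs_intCast_mul_add_le_inv (ξ : ℝ) {Y : ℝ} (hY : 1 ≤ Y) :
    ∃ c d : ℤ, IsCoprime c d ∧ c ≠ 0 ∧ |(c : ℝ)| ≤ Y ∧ |(c : ℝ) * ξ + d| ≤ Y⁻¹ := by
  have hY0 : 0 < Y := one_pos.trans_le hY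
  obtain ⟨j, k, hk, hkn, hkj⟩ := Real.exists_int_int_abs_mul_sub_le ξ (Nat.floor_pos.mpr hY)
  obtain ⟨c, d, hcop, hc, hck, hcd⟩ := exists_isCoprime_abs_intCast_mul_add_le hk.ne' (-j) ξ
  refine ⟨c, d, hcop, hc, hck.trans ?_, hcd.trans ?_⟩
  · rw [abs_of_pos (by exact_mod_cast hk)]
    calc (k : ℝ) ≤ ⌊Y⌋₊ := by exact_mod_cast hkn
      _ ≤ Y := Nat.floor_le hY0.le
  · calc |(k : ℝ) * ξ + (-j : ℤ)| ≤ 1 / (⌊Y⌋₊ + 1) := by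
          rwa [Int.cast_neg, ← sub_eq_add_neg]
      _ ≤ Y⁻¹ := by
          rw [one_div]
          gcongr
          exact (Nat.lt_floor_add_one Y).le

lemma le_rpow_neg_iff {a b w : ℝ} (hb : 0 < b) : a ≤ b ^ (-w) ↔ b ^ w * a ≤ 1 := by
  rw [Real.rpow_neg hb.le, ← one_div, le_div_iff₀' (by positivity)]

lemma one_mem_omegaSet (hξ : Irrational ξ) : (1 : ℝ) ∈ omegaSet ξ := by
  have hinj : Function.Injective fun q : ℚ => ((q.den : ℤ), -q.num) := by
    intro a b hab
    simp only [Prod.mk.injEq, Nat.cast_inj, neg_inj] at hab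
    exact Rat.ext hab.2 hab.1
  refine ((Real.infinite_rat_abs_sub_lt_one_div_den_sq_of_irrational hξ).image
    hinj.injOn).mono ?_
  rintro _ ⟨q, hq, rfl⟩
  have hform : (q.den : ℝ) * ξ + (-q.num : ℤ) = q.den * (ξ - q) := by
    have hnum : (q.den : ℝ) * q = q.num := by exact_mod_cast q.den_mul_eq_num
    rw [mul_sub, hnum, Int.cast_neg, sub_eq_add_neg]
  simp only [Set.mem_ofPred_eq, Int.cast_natCast] at hq ⊢
  rw [hform, abs_mul, Nat.abs_cast, Real.rpow_neg_one]
  calc (q.den : ℝ) * |ξ - q| ≤ q.den * (1 / q.den ^ 2) := by gcongr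
    _ = (q.den : ℝ)⁻¹ := by field_simp

lemma exists_pos_le_rpow_mul_of_notMem_omegaSet (hξ : Irrational ξ) {W : ℝ}
    (hW : W ∉ omegaSet ξ) :
    ∃ K > 0, ∀ c d : ℤ, c ≠ 0 → K ≤ |(c : ℝ)| ^ W * |(c : ℝ) * ξ + d| := by
  have hpos : ∀ c d : ℤ, c ≠ 0 → 0 < |(c : ℝ)| ^ W * |(c : ℝ) * ξ + d| := fun c d hc => by
    have := abs_intCast_mul_add_pos hξ (c := c) (d := d) (by simp [hc])
    positivity
  obtain ⟨K, hK, hle⟩ := exists_pos_forall_le_of_finite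
    ((Set.not_infinite.mp hW).subset (Set.sep_subset _ fun p : ℤ × ℤ => p.1 ≠ 0))
    (f := fun p => |(p.1 : ℝ)| ^ W * |(p.1 : ℝ) * ξ + p.2|) fun p hp => hpos _ _ hp.2
  refine ⟨min K 1, by positivity, fun c d hc => ?_⟩
  by_cases h : |(c : ℝ) * ξ + d| ≤ |(c : ℝ)| ^ (-W)
  · exact (min_le_left _ _).trans (hle (c, d) ⟨h, hc⟩)
  · rw [le_rpow_neg_iff (by positivity), not_le] at h
    exact (min_le_right _ _).trans h.le

lemma exists_lt_abs_of_mem_omegaSet {w : ℝ} (hw0 : 0 ≤ w) (hw : w ∈ omegaSet ξ) (R : ℝ) :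
    ∃ v u : ℤ, v ≠ 0 ∧ R < |(v : ℝ)| ∧ |(v : ℝ)| ^ w * |(v : ℝ) * ξ + u| ≤ 1 := by
  by_contra! h
  refine hw ((finite_setOf_abs_le_and_abs_mul_add_le ξ (max R 0) 1).subset ?_)
  rintro ⟨v, u⟩ (hvu : |(v : ℝ) * ξ + u| ≤ |(v : ℝ)| ^ (-w))
  rcases eq_or_ne v 0 with rfl | hv
  · refine ⟨by simp, hvu.trans ?_⟩
    rw [Int.cast_zero, abs_zero]
    exact Real.zero_rpow_le_one _
  · have hv1 : (1 : ℝ) ≤ |(v : ℝ)| := by exact_mod_cast Int.one_le_abs hv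
    refine ⟨le_max_of_le_left ?_,
      hvu.trans (Real.rpow_le_one_of_one_le_of_nonpos hv1 (neg_nonpos.mpr hw0))⟩
    by_contra! hR
    exact (h v u hv hR).not_ge ((le_rpow_neg_iff (by positivity)).mp hvu)

lemma exists_isCoprime_lt_of_mem_omegaSet {w : ℝ} (hw0 : 0 < w) (hw : w ∈ omegaSet ξ) {δ : ℝ}
    (hδ : 0 < δ) : ∃ c d : ℤ, IsCoprime c d ∧ c ≠ 0 ∧ |(c : ℝ) * ξ + d| < δ ∧
      |(c : ℝ)| ^ w * |(c : ℝ) * ξ + d| ≤ 1 := by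
  obtain ⟨V, hV⟩ := eventually_atTop.mp (eventually_mul_rpow_neg_lt 1 hδ hw0)
  obtain ⟨v, u, hv, hVv, hvu⟩ := exists_lt_abs_of_mem_omegaSet hw0.le hw V
  obtain ⟨c, d, hcop, hc, hcv, hcd⟩ := exists_isCoprime_abs_intCast_mul_add_le hv u ξ
  refine ⟨c, d, hcop, hc, ?_, ?_⟩
  · calc |(c : ℝ) * ξ + d| ≤ |(v : ℝ)| ^ (-w) :=
          hcd.trans ((le_rpow_neg_iff (by positivity)).mpr hvu)
      _ < δ := by simpa only [one_mul] using hV _ hVv.le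
  · calc |(c : ℝ)| ^ w * |(c : ℝ) * ξ + d| ≤ |(v : ℝ)| ^ w * |(v : ℝ) * ξ + u| := by gcongr
      _ ≤ 1 := hvu

end LinearForm

section Norms

lemma act_apply (g : Matrix (Fin 2) (Fin 2) ℤ) (x : Fin 2 → ℝ) (i : Fin 2) :
    act g x i = g i 0 * x 0 + g i 1 * x 1 := by
  simp [act, Matrix.mulVec, dotProduct]

lemma act_vec_one (g : Matrix (Fin 2) (Fin 2) ℤ) (ξ : ℝ) (i : Fin 2) :
    act g ![ξ, 1] i = g i 0 * ξ + g i 1 := by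
  simp [act_apply]

lemma act_mul (g h : Matrix (Fin 2) (Fin 2) ℤ) (x : Fin 2 → ℝ) :
    act (g * h) x = act g (act h x) := by
  rw [act, act, act, Matrix.mulVec_mulVec, Matrix.map_mul_intCast]

lemma act_sub (g : Matrix (Fin 2) (Fin 2) ℤ) (x y : Fin 2 → ℝ) :
    act g (x - y) = act g x - act g y :=
  Matrix.mulVec_sub _ x y

lemma act_smul (g : Matrix (Fin 2) (Fin 2) ℤ) (a : ℝ) (x : Fin 2 → ℝ) :
    act g (a • x) = a • act g x :=
  Matrix.mulVec_smul _ a x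

lemma abs_le_vnorm (v : Fin 2 → ℝ) (i : Fin 2) : |v i| ≤ vnorm v := by
  fin_cases i
  · exact le_max_left _ _
  · exact le_max_right _ _

lemma vnorm_le {v : Fin 2 → ℝ} {B : ℝ} (h : ∀ i, |v i| ≤ B) : vnorm v ≤ B :=
  max_le (h 0) (h 1)

lemma vnorm_nonneg (v : Fin 2 → ℝ) : 0 ≤ vnorm v :=
  (abs_nonneg _).trans (abs_le_vnorm v 0)

lemma vnorm_smul (a : ℝ) (v : Fin 2 → ℝ) : vnorm (a • v) = |a| * vnorm v := by
  simp only [vnorm, Pi.smul_apply, smul_eq_mul, abs_mul, mul_max_of_nonneg _ _ (abs_nonneg a)]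

lemma abs_le_mnorm (g : Matrix (Fin 2) (Fin 2) ℤ) (i j : Fin 2) : |(g i j : ℝ)| ≤ mnorm g := by
  unfold mnorm
  fin_cases i <;> fin_cases j <;> simp

lemma mnorm_le {g : Matrix (Fin 2) (Fin 2) ℤ} {B : ℝ} (h : ∀ i j, |(g i j : ℝ)| ≤ B) :
    mnorm g ≤ B :=
  max_le (max_le (h 0 0) (h 0 1)) (max_le (h 1 0) (h 1 1))

lemma mnorm_nonneg (g : Matrix (Fin 2) (Fin 2) ℤ) : 0 ≤ mnorm g :=
  (abs_nonneg _).trans (abs_le_mnorm g 0 0)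

lemma one_le_mnorm (γ : SL(2, ℤ)) : 1 ≤ mnorm γ := by
  obtain ⟨j, hj⟩ := Function.ne_iff.mp (γ.row_ne_zero 0)
  calc (1 : ℝ) ≤ |(γ 0 j : ℝ)| := by exact_mod_cast Int.one_le_abs hj
    _ ≤ mnorm γ := abs_le_mnorm _ 0 j

lemma vnorm_act_le (g : Matrix (Fin 2) (Fin 2) ℤ) (v : Fin 2 → ℝ) :
    vnorm (act g v) ≤ 2 * mnorm g * vnorm v := by
  have hg := mnorm_nonneg g
  refine vnorm_le fun i => ?_
  rw [act_apply]
  calc |g i 0 * v 0 + g i 1 * v 1| ≤ |(g i 0 : ℝ)| * |v 0| + |(g i 1 : ℝ)| * |v 1| := by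
        rw [← abs_mul, ← abs_mul]
        exact abs_add_le _ _
    _ ≤ mnorm g * vnorm v + mnorm g * vnorm v := by
        gcongr <;> first | exact abs_le_mnorm g _ _ | exact abs_le_vnorm v _
    _ = 2 * mnorm g * vnorm v := by ring

lemma mnorm_mul_le (g h : Matrix (Fin 2) (Fin 2) ℤ) : mnorm (g * h) ≤ 2 * mnorm g * mnorm h := by
  have hg := mnorm_nonneg g
  refine mnorm_le fun i j => ?_
  rw [Matrix.mul_apply, Fin.sum_univ_two, Int.cast_add, Int.cast_mul, Int.cast_mul]
  calc |(g i 0 * h 0 j + g i 1 * h 1 j : ℝ)|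
      ≤ |(g i 0 : ℝ)| * |(h 0 j : ℝ)| + |(g i 1 : ℝ)| * |(h 1 j : ℝ)| := by
        rw [← abs_mul, ← abs_mul]
        exact abs_add_le _ _
    _ ≤ mnorm g * mnorm h + mnorm g * mnorm h := by
        gcongr <;> exact abs_le_mnorm _ _ _
    _ = 2 * mnorm g * mnorm h := by ring

lemma mnorm_le_of_abs_act_le {g : Matrix (Fin 2) (Fin 2) ℤ} {ξ B : ℝ}
    (hcol : ∀ i, |(g i 0 : ℝ)| ≤ B) (hact : ∀ i, |act g ![ξ, 1] i| ≤ B) :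
    mnorm g ≤ (1 + |ξ|) * B := by
  have hB : 0 ≤ B := (abs_nonneg _).trans (hcol 0)
  refine mnorm_le fun i j => ?_
  match j with
  | 0 => exact (hcol i).trans (le_mul_of_one_le_left hB (by linarith [abs_nonneg ξ]))
  | 1 =>
    calc |(g i 1 : ℝ)| = |act g ![ξ, 1] i - g i 0 * ξ| := by rw [act_vec_one]; ring_nf
      _ ≤ |act g ![ξ, 1] i| + |(g i 0 : ℝ)| * |ξ| := by rw [← abs_mul]; exact abs_sub _ _
      _ ≤ B + B * |ξ| := by gcongr <;> apply_rules
      _ = (1 + |ξ|) * B := by ring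

lemma finite_setOf_mnorm_le (R : ℝ) : {g : Matrix (Fin 2) (Fin 2) ℤ | mnorm g ≤ R}.Finite := by
  have hbox : (Set.univ.pi fun _ : Fin 2 => Set.univ.pi fun _ : Fin 2 =>
      Set.Icc (-⌊R⌋) ⌊R⌋ : Set (Fin 2 → Fin 2 → ℤ)).Finite :=
    Set.Finite.pi fun _ => Set.Finite.pi fun _ => Set.finite_Icc _ _
  refine hbox.subset fun g hg i _ j _ => abs_le.mp ?_
  rw [Int.le_floor, Int.cast_abs]
  exact (abs_le_mnorm g i j).trans hg

lemma mem_muSet_iff {x y : Fin 2 → ℝ} {μ : ℝ} : μ ∈ muSet x y ↔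
    ∀ R : ℝ, ∃ γ : SL(2, ℤ), R < mnorm γ ∧ vnorm (act γ x - y) ≤ mnorm γ ^ (-μ) := by
  constructor
  · intro h R
    by_contra! hR
    exact h ((finite_setOf_mnorm_le R).subset fun g ⟨hdet, hg⟩ =>
      not_lt.mp fun hRg => (hR ⟨g, hdet⟩ hRg).not_ge hg)
  · intro h hfin
    obtain ⟨R, hR⟩ := (hfin.image mnorm).bddAbove
    obtain ⟨γ, hRγ, hγ⟩ := h R
    exact hRγ.not_ge (hR ⟨γ, ⟨γ.det_coe, hγ⟩, rfl⟩)

end Norms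

section RationalDirection

/-- The nonzero vectors of rational direction, encoded as the nonzero real multiples `t P (1, 0)`
of the `SL(2, ℤ)`-orbit of `(1, 0)`. In this form approximating `y` reduces to approximating
a point of the first coordinate axis. -/
def HasRationalDirection (y : Fin 2 → ℝ) : Prop :=
  ∃ (P : SL(2, ℤ)) (t : ℝ), t ≠ 0 ∧ y = act P ![t, 0]

lemma hasRationalDirection_of_isCoprime {p q : ℤ} (hpq : IsCoprime p q) {t : ℝ} (ht : t ≠ 0) :
    HasRationalDirection ![t * p, t * q] := by
  obtain ⟨P, hp, hq⟩ := hpq.exists_SL2_col 0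
  refine ⟨P, t, ht, ?_⟩
  ext i
  fin_cases i <;> simp [act_apply, hp, hq, mul_comm]

lemma hasRationalDirection_of_slope {y : Fin 2 → ℝ} (hy : y ≠ 0)
    (hslope : y 1 = 0 ∨ ∃ r : ℚ, y 0 = (r : ℝ) * y 1) : HasRationalDirection y := by
  by_cases h1 : y 1 = 0
  · have h0 : y 0 ≠ 0 := fun h0 => hy (by ext i; fin_cases i <;> assumption)
    convert! hasRationalDirection_of_isCoprime (isCoprime_one_left (x := 0)) h0 using 1
    ext i
    fin_cases i <;> simp [h1]
  · obtain ⟨r, hr⟩ := hslope.resolve_left h1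
    have hden : (r.den : ℝ) ≠ 0 := by exact_mod_cast r.den_nz
    convert! hasRationalDirection_of_isCoprime r.isCoprime_num_den
      (div_ne_zero h1 hden) using 1
    ext i
    fin_cases i
    · simp only [hr, Rat.cast_def, Fin.zero_eta, Matrix.cons_val_zero]
      ring
    · simp [hden]

lemma act_sub_act_eq_smul {x : Fin 2 → ℝ} (hx : x 1 ≠ 0) (P γ : SL(2, ℤ)) (t : ℝ) :
    act ↑(P * γ) x - act P ![t, 0] =
      x 1 • act P (act γ ![x 0 / x 1, 1] - ![t / x 1, 0]) := by
  have hx' : x = x 1 • ![x 0 / x 1, 1] := by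
    ext i
    fin_cases i <;> simp [mul_div_cancel₀, hx]
  have ht : ![t, 0] = x 1 • ![t / x 1, 0] := by
    ext i
    fin_cases i <;> simp [mul_div_cancel₀, hx]
  rw [act_sub, smul_sub, ← act_smul, ← act_smul, ← act_smul, ← ht, ← hx', ← act_mul,
    Matrix.SpecialLinearGroup.coe_mul]

end RationalDirection

section Comparison

lemma ne_zero_of_irrational_div {a b : ℝ} (h : Irrational (a / b)) : b ≠ 0 := by
  rintro rfl
  exact h.ne_zero (div_zero a)

lemma exists_pos_lt_abs_bottom_left {ξ : ℝ} (hξ : Irrational ξ) (M : ℝ) :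
    ∃ K > 0, ∀ γ : SL(2, ℤ), |act γ ![ξ, 1] 1| < K → M < |(γ 1 0 : ℝ)| := by
  obtain ⟨K, hK, hle⟩ := exists_pos_le_abs_intCast_mul_add hξ M
  refine ⟨K, hK, fun γ hγ => ?_⟩
  rw [act_vec_one] at hγ
  by_contra! hM
  have hrow : (γ 1 0, γ 1 1) ≠ 0 := fun h =>
    (γ.isCoprime_row 1).ne_zero_or_ne_zero.elim (· (Prod.ext_iff.mp h).1) (· (Prod.ext_iff.mp h).2)
  exact (hle _ _ hrow hM).not_gt hγ

lemma mul_act_one_sub_mul_act_zero (γ : SL(2, ℤ)) (ξ : ℝ) :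
    γ 0 0 * act γ ![ξ, 1] 1 - γ 1 0 * act γ ![ξ, 1] 0 = 1 := by
  have hdet : (γ 0 0 * γ 1 1 - γ 0 1 * γ 1 0 : ℝ) = 1 := by
    exact_mod_cast (Matrix.det_fin_two _).symm.trans γ.det_coe
  rw [act_vec_one, act_vec_one]
  linear_combination hdet

lemma exists_abs_bottom_left_le_mnorm_mul {ξ t : ℝ} (hξ : Irrational ξ) (ht : t ≠ 0) :
    ∃ δ > 0, ∀ γ : SL(2, ℤ), vnorm (act γ ![ξ, 1] - ![t, 0]) < δ → γ 1 0 ≠ 0 ∧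
      |(γ 1 0 : ℝ)| ≤ 4 / |t| * mnorm γ * |act γ ![ξ, 1] 1| := by
  have ht0 : 0 < |t| := abs_pos.mpr ht
  obtain ⟨K, hK, hlarge⟩ := exists_pos_lt_abs_bottom_left hξ (4 / |t|)
  refine ⟨min K (|t| / 2), by positivity, fun γ hγ => ?_⟩
  set z := act γ ![ξ, 1]
  have hz0 : |t| / 2 ≤ |z 0| := by
    have h : |t - z 0| < |t| / 2 :=
      calc |t - z 0| = |(z - ![t, 0]) 0| := by rw [abs_sub_comm]; simp
        _ < |t| / 2 := (abs_le_vnorm _ 0).trans_lt (hγ.trans_le (min_le_right _ _))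
    linarith [abs_sub_abs_le_abs_sub t (z 0)]
  have hz1 : |z 1| < K :=
    calc |z 1| = |(z - ![t, 0]) 1| := by simp
      _ < K := (abs_le_vnorm _ 1).trans_lt (hγ.trans_le (min_le_left _ _))
  have hc : 4 / |t| < |(γ 1 0 : ℝ)| := hlarge γ hz1
  refine ⟨fun h => ?_, ?_⟩
  · rw [h, Int.cast_zero, abs_zero] at hc
    exact hc.not_gt (by positivity)
  have hdet : |(γ 1 0 : ℝ)| * |z 0| ≤ mnorm γ * |z 1| + 1 :=
    calc |(γ 1 0 : ℝ)| * |z 0| = |γ 0 0 * z 1 - 1| := by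
          rw [← abs_mul, ← mul_act_one_sub_mul_act_zero γ ξ, sub_sub_cancel]
      _ ≤ |(γ 0 0 : ℝ)| * |z 1| + 1 := by
          rw [← abs_mul]
          simpa only [abs_one] using abs_sub (γ 0 0 * z 1) 1
      _ ≤ mnorm γ * |z 1| + 1 := by gcongr; exact abs_le_mnorm _ 0 0
  rw [div_lt_iff₀ ht0] at hc
  have hcz : |(γ 1 0 : ℝ)| * (|t| / 2) ≤ |(γ 1 0 : ℝ)| * |z 0| := by gcongr
  rw [mul_assoc, div_mul_eq_mul_div, le_div_iff₀ ht0]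
  linarith

lemma exists_abs_form_le_vnorm_of_axis {ξ t : ℝ} (hξ : Irrational ξ) (ht : t ≠ 0) :
    ∃ C > 0, ∀ γ : SL(2, ℤ), ∃ c d : ℤ, c ≠ 0 ∧
      |(c : ℝ) * ξ + d| ≤ C * vnorm (act γ ![ξ, 1] - ![t, 0]) ∧
      |(c : ℝ)| ≤ C * mnorm γ * |(c : ℝ) * ξ + d| := by
  obtain ⟨δ, hδ, hrow⟩ := exists_abs_bottom_left_le_mnorm_mul hξ ht
  have hξ0 : 0 < |ξ| := abs_pos.mpr hξ.ne_zero
  set C := max (max 1 (|ξ| / δ)) (max (4 / |t|) |ξ|⁻¹)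
  have hC0 : 0 < C := by positivity
  refine ⟨C, hC0, fun γ => ?_⟩
  have hN : 1 ≤ mnorm γ := one_le_mnorm γ
  set e := vnorm (act γ ![ξ, 1] - ![t, 0])
  rcases lt_or_ge e δ with he | he
  · obtain ⟨hc, hcN⟩ := hrow γ he
    rw [act_vec_one] at hcN
    refine ⟨γ 1 0, γ 1 1, hc, ?_, hcN.trans ?_⟩
    · calc |(γ 1 0 : ℝ) * ξ + γ 1 1| = |(act γ ![ξ, 1] - ![t, 0]) 1| := by simp [act_vec_one]
        _ ≤ 1 * e := by rw [one_mul]; exact abs_le_vnorm _ 1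
        _ ≤ C * e := by
          gcongr
          · exact vnorm_nonneg _
          · exact (le_max_left _ _).trans (le_max_left _ _)
    · gcongr
      exact (le_max_left _ _).trans (le_max_right _ _)
  -- Away from `y` both bounds are insensitive to `γ`, so the pair `(1, 0)` serves.
  · refine ⟨1, 0, one_ne_zero, ?_, ?_⟩
    · rw [Int.cast_one, one_mul, Int.cast_zero, add_zero]
      calc |ξ| = |ξ| / δ * δ := by field_simp
        _ ≤ C * e := by gcongr; exact (le_max_right _ _).trans (le_max_left _ _)
    · rw [Int.cast_one, one_mul, Int.cast_zero, add_zero, abs_one]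
      calc 1 = |ξ|⁻¹ * 1 * |ξ| := by field_simp
        _ ≤ C * mnorm γ * |ξ| := by gcongr; exact (le_max_right _ _).trans (le_max_right _ _)

lemma exists_abs_form_le_vnorm {x y : Fin 2 → ℝ} (hξ : Irrational (x 0 / x 1))
    (hy : HasRationalDirection y) :
    ∃ C > 0, ∀ γ : SL(2, ℤ), ∃ c d : ℤ, c ≠ 0 ∧
      |(c : ℝ) * (x 0 / x 1) + d| ≤ C * vnorm (act γ x - y) ∧
      |(c : ℝ)| ≤ C * mnorm γ * |(c : ℝ) * (x 0 / x 1) + d| := by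
  obtain ⟨P, t, ht, rfl⟩ := hy
  have hx : x 1 ≠ 0 := ne_zero_of_irrational_div hξ
  obtain ⟨C, hC, hform⟩ := exists_abs_form_le_vnorm_of_axis hξ (div_ne_zero ht hx)
  set B := 2 * mnorm ↑P⁻¹
  have hB : 0 < B := by linarith [one_le_mnorm P⁻¹]
  refine ⟨C * max B (B / |x 1|), by positivity, fun γ => ?_⟩
  obtain ⟨c, d, hc, hcd, hcN⟩ := hform (P⁻¹ * γ)
  refine ⟨c, d, hc, ?_, ?_⟩
  · set z := act ↑(P⁻¹ * γ) ![x 0 / x 1, 1] - ![t / x 1, 0]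
    have hz : x 1 • z = act ↑P⁻¹ (act γ x - act P ![t, 0]) := by
      rw [← mul_inv_cancel_left P γ, act_sub_act_eq_smul hx, act_smul, ← act_mul,
        ← Matrix.SpecialLinearGroup.coe_mul]
      simp [act, z]
    have hzN : |x 1| * vnorm z ≤ B * vnorm (act γ x - act P ![t, 0]) := by
      rw [← vnorm_smul, hz]
      exact vnorm_act_le _ _
    have he := vnorm_nonneg (act γ x - act P ![t, 0])
    calc |(c : ℝ) * (x 0 / x 1) + d| ≤ C * vnorm z := hcd
      _ ≤ C * (B / |x 1| * vnorm (act γ x - act P ![t, 0])) := by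
        gcongr
        rwa [div_mul_eq_mul_div, le_div_iff₀' (abs_pos.mpr hx)]
      _ ≤ C * max B (B / |x 1|) * vnorm (act γ x - act P ![t, 0]) := by
        rw [← mul_assoc]
        gcongr
        exact le_max_right _ _
  · have hγ := mnorm_nonneg (γ : Matrix (Fin 2) (Fin 2) ℤ)
    calc |(c : ℝ)| ≤ C * mnorm ↑(P⁻¹ * γ) * |(c : ℝ) * (x 0 / x 1) + d| := hcN
      _ ≤ C * (B * mnorm γ) * |(c : ℝ) * (x 0 / x 1) + d| := by
        gcongr
        exact mnorm_mul_le _ _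
      _ ≤ C * max B (B / |x 1|) * mnorm γ * |(c : ℝ) * (x 0 / x 1) + d| := by
        rw [← mul_assoc]
        gcongr
        exact le_max_left _ _

lemma exists_SL2_row_abs_act_sub_le {c d : ℤ} (hcd : IsCoprime c d) {ξ : ℝ}
    (hne : (c : ℝ) * ξ + d ≠ 0) (t : ℝ) :
    ∃ γ : SL(2, ℤ), γ 1 0 = c ∧ γ 1 1 = d ∧ |act γ ![ξ, 1] 0 - t| ≤ |(c : ℝ) * ξ + d| := by
  obtain ⟨g, hc, hd⟩ := hcd.exists_SL2_row 1
  set z := (c : ℝ) * ξ + d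
  set s := (t - act g ![ξ, 1] 0) / z with hs
  have hrow (j : Fin 2) : (ModularGroup.T ^ round s * g) 1 j = g 1 j :=
    congrFun (ModularGroup.T_pow_mul_apply_one _ g) j
  have htop : act ↑(ModularGroup.T ^ round s * g) ![ξ, 1] 0 - t = (round s - s) * z := by
    have hg : act g ![ξ, 1] 1 = z := by rw [act_vec_one, hc, hd]
    rw [Matrix.SpecialLinearGroup.coe_mul, act_mul, act_apply, hg, ModularGroup.coe_T_zpow,
      sub_mul, hs, div_mul_cancel₀ _ hne]
    simp only [Matrix.of_apply, Matrix.cons_val', Matrix.cons_val_zero, Matrix.cons_val_one,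
      Matrix.cons_val_fin_one, Int.cast_one]
    ring
  refine ⟨ModularGroup.T ^ round s * g, (hrow 0).trans hc, (hrow 1).trans hd, ?_⟩
  rw [htop, abs_mul, abs_sub_comm]
  exact mul_le_of_le_one_left (abs_nonneg _) ((abs_sub_round s).trans (by norm_num))

lemma mnorm_le_of_abs_act_zero_le {γ : SL(2, ℤ)} {ξ S : ℝ} (hc : γ 1 0 ≠ 0)
    (hz : act γ ![ξ, 1] 1 ≠ 0) (hz1 : |act γ ![ξ, 1] 1| ≤ 1) (htop : |act γ ![ξ, 1] 0| ≤ S) :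
    mnorm γ ≤ (1 + |ξ|) * ((S + 1) * (|(γ 1 0 : ℝ)| / |act γ ![ξ, 1] 1|)) := by
  set z := act γ ![ξ, 1]
  set Q := |(γ 1 0 : ℝ)| / |z 1| with hQ
  have hz0 : 0 < |z 1| := abs_pos.mpr hz
  have hc1 : (1 : ℝ) ≤ |(γ 1 0 : ℝ)| := by exact_mod_cast Int.one_le_abs hc
  have hcQ : |(γ 1 0 : ℝ)| ≤ Q := le_div_self (abs_nonneg _) hz0 hz1
  have hS : 0 ≤ S := (abs_nonneg _).trans htop
  have hQS : Q ≤ (S + 1) * Q := le_mul_of_one_le_left (by positivity) (by linarith)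
  have hQS1 : S + 1 ≤ (S + 1) * Q := le_mul_of_one_le_right (by positivity) (hc1.trans hcQ)
  have ha : |(γ 0 0 : ℝ)| ≤ (S + 1) * Q := by
    rw [hQ, ← mul_div_assoc, le_div_iff₀ hz0]
    calc |(γ 0 0 : ℝ)| * |z 1| = |1 + γ 1 0 * z 0| := by
          rw [← abs_mul, ← mul_act_one_sub_mul_act_zero γ ξ, sub_add_cancel]
      _ ≤ 1 + |(γ 1 0 : ℝ)| * |z 0| := by
          rw [← abs_mul]
          simpa only [abs_one] using abs_add_le 1 (γ 1 0 * z 0)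
      _ ≤ |(γ 1 0 : ℝ)| + |(γ 1 0 : ℝ)| * S := by gcongr
      _ = (S + 1) * |(γ 1 0 : ℝ)| := by ring
  refine mnorm_le_of_abs_act_le (fun i => ?_) (fun i => ?_) <;> fin_cases i
  · exact ha
  · exact hcQ.trans hQS
  · exact htop.trans (by linarith)
  · exact hz1.trans (by linarith)

lemma exists_vnorm_le_abs_form_of_axis {ξ : ℝ} (hξ : Irrational ξ) (t : ℝ) :
    ∃ C, ∀ c d : ℤ, IsCoprime c d → c ≠ 0 → |(c : ℝ) * ξ + d| ≤ 1 →
      ∃ γ : SL(2, ℤ), vnorm (act γ ![ξ, 1] - ![t, 0]) ≤ |(c : ℝ) * ξ + d| ∧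
        mnorm γ ≤ C * (|(c : ℝ)| / |(c : ℝ) * ξ + d|) := by
  refine ⟨(1 + |ξ|) * (|t| + 1 + 1), fun c d hcop hc hcd => ?_⟩
  have hne : (c : ℝ) * ξ + d ≠ 0 := abs_pos.mp (abs_intCast_mul_add_pos hξ (by simp [hc]))
  obtain ⟨γ, hγc, hγd, hγ⟩ := exists_SL2_row_abs_act_sub_le hcop hne t
  have hz : act γ ![ξ, 1] 1 = c * ξ + d := by rw [act_vec_one, hγc, hγd]
  refine ⟨γ, vnorm_le fun i => ?_, ?_⟩
  · fin_cases i
    · simpa using hγ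
    · simp [hz]
  · have htop : |act γ ![ξ, 1] 0| ≤ |t| + 1 := by
      linarith [abs_sub_abs_le_abs_sub (act γ ![ξ, 1] 0) t]
    rw [mul_assoc, ← hz, ← hγc]
    exact mnorm_le_of_abs_act_zero_le (hγc ▸ hc) (hz ▸ hne) (hz ▸ hcd) htop

lemma exists_vnorm_le_abs_form {x y : Fin 2 → ℝ} (hξ : Irrational (x 0 / x 1))
    (hy : HasRationalDirection y) :
    ∃ C > 0, ∀ c d : ℤ, IsCoprime c d → c ≠ 0 → |(c : ℝ) * (x 0 / x 1) + d| ≤ 1 →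
      ∃ γ : SL(2, ℤ), vnorm (act γ x - y) ≤ C * |(c : ℝ) * (x 0 / x 1) + d| ∧
        mnorm γ ≤ C * (|(c : ℝ)| / |(c : ℝ) * (x 0 / x 1) + d|) := by
  obtain ⟨P, t, -, rfl⟩ := hy
  have hx : x 1 ≠ 0 := ne_zero_of_irrational_div hξ
  obtain ⟨C, happ⟩ := exists_vnorm_le_abs_form_of_axis hξ (t / x 1)
  set B := 2 * mnorm P
  have hB : 0 < B := by linarith [one_le_mnorm P]
  refine ⟨max (|x 1| * B) (B * C), by positivity, fun c d hcop hc hcd => ?_⟩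
  obtain ⟨γ, hγ, hN⟩ := happ c d hcop hc hcd
  refine ⟨P * γ, ?_, ?_⟩
  · rw [act_sub_act_eq_smul hx, vnorm_smul]
    calc |x 1| * vnorm (act P (act γ ![x 0 / x 1, 1] - ![t / x 1, 0]))
        ≤ |x 1| * (B * |(c : ℝ) * (x 0 / x 1) + d|) := by
          gcongr
          exact (vnorm_act_le _ _).trans (by gcongr)
      _ ≤ max (|x 1| * B) (B * C) * |(c : ℝ) * (x 0 / x 1) + d| := by
          rw [← mul_assoc]
          gcongr
          exact le_max_left _ _
  · calc mnorm ↑(P * γ) ≤ B * mnorm γ := mnorm_mul_le _ _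
      _ ≤ B * (C * (|(c : ℝ)| / |(c : ℝ) * (x 0 / x 1) + d|)) := by gcongr
      _ ≤ max (|x 1| * B) (B * C) * (|(c : ℝ)| / |(c : ℝ) * (x 0 / x 1) + d|) := by
          rw [← mul_assoc]
          gcongr
          exact le_max_right _ _

end Comparison

section Exponents

variable {x y : Fin 2 → ℝ}

lemma exists_one_le_mul_mnorm_mul_vnorm (hξ : Irrational (x 0 / x 1))
    (hy : HasRationalDirection y) :
    ∃ C > 0, ∀ γ : SL(2, ℤ), 1 ≤ C * mnorm γ * vnorm (act γ x - y) := by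
  obtain ⟨C, hC, hform⟩ := exists_abs_form_le_vnorm hξ hy
  refine ⟨C * C, by positivity, fun γ => ?_⟩
  have hN := mnorm_nonneg (γ : Matrix (Fin 2) (Fin 2) ℤ)
  obtain ⟨c, d, hc, hε, hcN⟩ := hform γ
  calc (1 : ℝ) ≤ |(c : ℝ)| := by exact_mod_cast Int.one_le_abs hc
    _ ≤ C * mnorm γ * |(c : ℝ) * (x 0 / x 1) + d| := hcN
    _ ≤ C * mnorm γ * (C * vnorm (act γ x - y)) := by gcongr
    _ = C * C * mnorm γ * vnorm (act γ x - y) := by ring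

lemma exists_pos_le_mnorm_rpow_mul_vnorm_rpow (hξ : Irrational (x 0 / x 1))
    (hy : HasRationalDirection y) {W : ℝ} (hW0 : 0 ≤ W) (hW : W ∉ omegaSet (x 0 / x 1)) :
    ∃ K > 0, ∀ γ : SL(2, ℤ), K ≤ mnorm γ ^ W * vnorm (act γ x - y) ^ (W + 1) := by
  obtain ⟨K, hK, hlow⟩ := exists_pos_le_rpow_mul_of_notMem_omegaSet hξ hW
  obtain ⟨C, hC, hform⟩ := exists_abs_form_le_vnorm hξ hy
  refine ⟨K / (C ^ W * C ^ (W + 1)), by positivity, fun γ => ?_⟩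
  have hN := mnorm_nonneg (γ : Matrix (Fin 2) (Fin 2) ℤ)
  have he := vnorm_nonneg (act γ x - y)
  obtain ⟨c, d, hc, hε, hcN⟩ := hform γ
  set ε := |(c : ℝ) * (x 0 / x 1) + d|
  have hε0 : 0 < ε := abs_intCast_mul_add_pos hξ (by simp [hc])
  rw [div_le_iff₀' (by positivity)]
  calc K ≤ |(c : ℝ)| ^ W * ε := hlow c d hc
    _ ≤ (C * mnorm γ * ε) ^ W * ε := by gcongr
    _ = C ^ W * mnorm γ ^ W * ε ^ (W + 1) := by
      rw [Real.mul_rpow (by positivity) hε0.le, Real.mul_rpow hC.le hN,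
        Real.rpow_add_one hε0.ne', mul_assoc]
    _ ≤ C ^ W * mnorm γ ^ W * (C * vnorm (act γ x - y)) ^ (W + 1) := by gcongr
    _ = C ^ W * C ^ (W + 1) * (mnorm γ ^ W * vnorm (act γ x - y) ^ (W + 1)) := by
      rw [Real.mul_rpow hC.le he]
      ring

lemma le_div_add_one_of_mem_muSet (hξ : Irrational (x 0 / x 1)) (hy : HasRationalDirection y)
    {W : ℝ} (hW0 : 0 ≤ W) (hW : W ∉ omegaSet (x 0 / x 1)) {μ : ℝ} (hμ : μ ∈ muSet x y) :
    μ ≤ W / (W + 1) := by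
  obtain ⟨K, hK, hlow⟩ := exists_pos_le_mnorm_rpow_mul_vnorm_rpow hξ hy hW0 hW
  have hfreq : ∃ᶠ T : ℝ in atTop, K ≤ 1 * T ^ (W - μ * (W + 1)) := by
    refine frequently_atTop.mpr fun R => ?_
    obtain ⟨γ, hRγ, hγ⟩ := mem_muSet_iff.mp hμ R
    have hN : 0 < mnorm γ := one_pos.trans_le (one_le_mnorm γ)
    refine ⟨mnorm γ, hRγ.le, ?_⟩
    calc K ≤ mnorm γ ^ W * vnorm (act γ x - y) ^ (W + 1) := hlow γ
      _ ≤ mnorm γ ^ W * (mnorm γ ^ (-μ)) ^ (W + 1) := by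
        gcongr
        exact vnorm_nonneg _
      _ = 1 * mnorm γ ^ (W - μ * (W + 1)) := by
        rw [← Real.rpow_mul hN.le, ← Real.rpow_add hN]
        ring_nf
  rw [le_div_iff₀ (by linarith)]
  linarith [nonneg_of_frequently_le_mul_rpow hK hfreq]

lemma exists_mnorm_rpow_mul_vnorm_rpow_le (hξ : Irrational (x 0 / x 1))
    (hy : HasRationalDirection y) {w : ℝ} (hw0 : 0 < w) (hw : w ∈ omegaSet (x 0 / x 1)) :
    ∃ C > 0, ∀ δ > 0, ∃ γ : SL(2, ℤ), vnorm (act γ x - y) < δ ∧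
      mnorm γ ^ w * vnorm (act γ x - y) ^ (w + 1) ≤ C := by
  obtain ⟨C, hC, happ⟩ := exists_vnorm_le_abs_form hξ hy
  refine ⟨C ^ w * C ^ (w + 1), by positivity, fun δ hδ => ?_⟩
  obtain ⟨c, d, hcop, hc, hεδ, hcε⟩ :=
    exists_isCoprime_lt_of_mem_omegaSet hw0 hw (lt_min (div_pos hδ hC) one_pos)
  obtain ⟨γ, he, hN⟩ := happ c d hcop hc (hεδ.le.trans (min_le_right _ _))
  have hN0 := mnorm_nonneg (γ : Matrix (Fin 2) (Fin 2) ℤ)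
  have he0 := vnorm_nonneg (act γ x - y)
  set ε := |(c : ℝ) * (x 0 / x 1) + d|
  have hε0 : 0 < ε := abs_intCast_mul_add_pos hξ (by simp [hc])
  refine ⟨γ, he.trans_lt ((lt_div_iff₀' hC).mp (hεδ.trans_le (min_le_left _ _))), ?_⟩
  calc mnorm γ ^ w * vnorm (act γ x - y) ^ (w + 1)
      ≤ (C * (|(c : ℝ)| / ε)) ^ w * (C * ε) ^ (w + 1) := by gcongr
    _ = C ^ w * C ^ (w + 1) * (|(c : ℝ)| ^ w * ε) := by
      rw [Real.mul_rpow hC.le (by positivity), Real.mul_rpow hC.le hε0.le,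
        Real.div_rpow (abs_nonneg _) hε0.le, Real.rpow_add_one hε0.ne']
      field_simp
    _ ≤ C ^ w * C ^ (w + 1) := mul_le_of_le_one_right (by positivity) hcε

lemma mem_muSet_of_lt_div_add_one (hξ : Irrational (x 0 / x 1)) (hy : HasRationalDirection y)
    {w : ℝ} (hw0 : 0 < w) (hw : w ∈ omegaSet (x 0 / x 1)) {μ : ℝ} (hμ : μ < w / (w + 1)) :
    μ ∈ muSet x y := by
  obtain ⟨A, hA, hlow⟩ := exists_one_le_mul_mnorm_mul_vnorm hξ hy
  obtain ⟨C, hC, happ⟩ := exists_mnorm_rpow_mul_vnorm_rpow_le hξ hy hw0 hw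
  obtain ⟨T₀, hT₀⟩ := eventually_atTop.mp
    (eventually_mul_rpow_neg_le_rpow_neg (C ^ (w + 1)⁻¹) hμ)
  refine mem_muSet_iff.mpr fun R => ?_
  obtain ⟨γ, heδ, hNe⟩ := happ (A * max 1 (max R T₀))⁻¹ (by positivity)
  have hN0 : 0 < mnorm γ := one_pos.trans_le (one_le_mnorm γ)
  have he0 := vnorm_nonneg (act γ x - y)
  have hN : max 1 (max R T₀) < mnorm γ := by
    refine lt_of_mul_lt_mul_left ?_ hA.le
    have := (hlow γ).trans_lt (mul_lt_mul_of_pos_left heδ (mul_pos hA hN0))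
    rwa [← div_eq_mul_inv, one_lt_div (by positivity)] at this
  have he : vnorm (act γ x - y) ≤ C ^ (w + 1)⁻¹ * mnorm γ ^ (-(w / (w + 1))) := by
    calc vnorm (act γ x - y) = (vnorm (act γ x - y) ^ (w + 1)) ^ (w + 1)⁻¹ :=
          (Real.rpow_rpow_inv he0 (by positivity)).symm
      _ ≤ (C * mnorm γ ^ (-w)) ^ (w + 1)⁻¹ := by
        gcongr
        rwa [Real.rpow_neg hN0.le, ← div_eq_mul_inv, le_div_iff₀' (by positivity)]
      _ = C ^ (w + 1)⁻¹ * mnorm γ ^ (-(w / (w + 1))) := by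
        rw [Real.mul_rpow hC.le (by positivity), ← Real.rpow_mul hN0.le, neg_mul, ← div_eq_mul_inv]
  have hRT := (le_max_right _ _).trans_lt hN
  exact ⟨γ, (le_max_left _ _).trans_lt hRT, he.trans (hT₀ _ ((le_max_right _ _).trans hRT.le))⟩

/-- If `|γ|` is small compared with `|v| / |v ξ + u|`, the pair attached to `γ` is not proportional
to `(v, u)`, so their integer determinant is nonzero. -/
lemma exists_one_le_mul_abs_mul_vnorm (hξ : Irrational (x 0 / x 1))
    (hy : HasRationalDirection y) :
    ∃ C > 0, ∀ (γ : SL(2, ℤ)) (v u : ℤ), v ≠ 0 →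
      C * mnorm γ * |(v : ℝ) * (x 0 / x 1) + u| ≤ |(v : ℝ)| →
        1 ≤ C * |(v : ℝ)| * vnorm (act γ x - y) := by
  obtain ⟨C, hC, hform⟩ := exists_abs_form_le_vnorm hξ hy
  refine ⟨2 * C, by positivity, fun γ v u hv hγ => ?_⟩
  obtain ⟨c, d, hc, hε, hcN⟩ := hform γ
  set ξ := x 0 / x 1
  have hv0 : 0 < |(v : ℝ)| := by positivity
  have hε0 : 0 < |(c : ℝ) * ξ + d| := abs_intCast_mul_add_pos hξ (by simp [hc])
  have hcv : |(c : ℝ)| * |(v : ℝ) * ξ + u| ≤ |(v : ℝ)| * |(c : ℝ) * ξ + d| / 2 :=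
    calc |(c : ℝ)| * |(v : ℝ) * ξ + u|
        ≤ C * mnorm γ * |(c : ℝ) * ξ + d| * |(v : ℝ) * ξ + u| := by gcongr
      _ = 2 * C * mnorm γ * |(v : ℝ) * ξ + u| * |(c : ℝ) * ξ + d| / 2 := by ring
      _ ≤ |(v : ℝ)| * |(c : ℝ) * ξ + d| / 2 := by gcongr
  have hdet : (c : ℝ) * (v * ξ + u) - v * (c * ξ + d) = (c * u - v * d : ℤ) := by
    push_cast
    ring
  have hne : c * u - v * d ≠ 0 := by
    intro h
    rw [h, Int.cast_zero, sub_eq_zero] at hdet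
    rw [← abs_mul, hdet, abs_mul] at hcv
    linarith [mul_pos hv0 hε0]
  calc (1 : ℝ) ≤ |((c * u - v * d : ℤ) : ℝ)| := by exact_mod_cast Int.one_le_abs hne
    _ ≤ |(c : ℝ)| * |(v : ℝ) * ξ + u| + |(v : ℝ)| * |(c : ℝ) * ξ + d| := by
      rw [← hdet, ← abs_mul, ← abs_mul]
      exact abs_sub _ _
    _ ≤ 2 * |(v : ℝ)| * |(c : ℝ) * ξ + d| := by linarith [mul_pos hv0 hε0]
    _ ≤ 2 * |(v : ℝ)| * (C * vnorm (act γ x - y)) := by gcongr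
    _ = 2 * C * |(v : ℝ)| * vnorm (act γ x - y) := by ring

lemma exists_frequently_one_le_mul_vnorm_rpow (hξ : Irrational (x 0 / x 1))
    (hy : HasRationalDirection y) {w : ℝ} (hw0 : 0 ≤ w) (hw : w ∈ omegaSet (x 0 / x 1)) :
    ∃ C > 0, ∃ᶠ T : ℝ in atTop, 0 < T ∧ ∀ γ : SL(2, ℤ), mnorm γ ≤ T →
      1 ≤ C * T * vnorm (act γ x - y) ^ (w + 1) := by
  obtain ⟨C, hC, hgap⟩ := exists_one_le_mul_abs_mul_vnorm hξ hy
  refine ⟨C ^ (w + 1) * C, by positivity, frequently_atTop.mpr fun R => ?_⟩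
  obtain ⟨v, u, hv, hRv, hvu⟩ := exists_lt_abs_of_mem_omegaSet hw0 hw (C * R)
  set η := |(v : ℝ) * (x 0 / x 1) + u|
  have hη : 0 < η := abs_intCast_mul_add_pos hξ (by simp [hv])
  have hv1 : (1 : ℝ) ≤ |(v : ℝ)| := by exact_mod_cast Int.one_le_abs hv
  have hη1 : η ≤ 1 :=
    (le_mul_of_one_le_left hη.le (Real.one_le_rpow hv1 hw0)).trans hvu
  set T := |(v : ℝ)| / (C * η) with hT
  have hTη : C * T * η = |(v : ℝ)| := by rw [hT]; field_simp
  have hT0 : 0 < T := by positivity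
  have hvT : |(v : ℝ)| ^ (w + 1) ≤ C * T :=
    calc |(v : ℝ)| ^ (w + 1) = C * T * (|(v : ℝ)| ^ w * η) := by
          rw [Real.rpow_add_one (by positivity), ← hTη]
          ring
      _ ≤ C * T := mul_le_of_le_one_right (by positivity) hvu
  refine ⟨T, ?_, hT0, fun γ hγT => ?_⟩
  · refine le_of_mul_le_mul_left ?_ hC
    calc C * R ≤ C * T * η := hTη ▸ hRv.le
      _ ≤ C * T := mul_le_of_le_one_right (by positivity) hη1
  · have he := vnorm_nonneg (act γ x - y)
    have hvγ : 1 ≤ C * |(v : ℝ)| * vnorm (act γ x - y) := by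
      refine hgap γ v u hv ?_
      rw [← hTη]
      gcongr
    calc 1 ≤ (C * |(v : ℝ)| * vnorm (act γ x - y)) ^ (w + 1) :=
          Real.one_le_rpow hvγ (by positivity)
      _ = C ^ (w + 1) * |(v : ℝ)| ^ (w + 1) * vnorm (act γ x - y) ^ (w + 1) := by
        rw [Real.mul_rpow (by positivity) he, Real.mul_rpow hC.le (by positivity)]
      _ ≤ C ^ (w + 1) * (C * T) * vnorm (act γ x - y) ^ (w + 1) := by gcongr
      _ = C ^ (w + 1) * C * T * vnorm (act γ x - y) ^ (w + 1) := by ring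

lemma le_one_div_add_one_of_mem_muHatSet (hξ : Irrational (x 0 / x 1))
    (hy : HasRationalDirection y) {w : ℝ} (hw0 : 0 ≤ w) (hw : w ∈ omegaSet (x 0 / x 1)) {μ : ℝ}
    (hμ : μ ∈ muHatSet x y) : μ ≤ 1 / (w + 1) := by
  obtain ⟨C, hC, hgap⟩ := exists_frequently_one_le_mul_vnorm_rpow hξ hy hw0 hw
  obtain ⟨T₀, hT₀⟩ := hμ
  have hfreq : ∃ᶠ T : ℝ in atTop, 1 ≤ C * T ^ (1 - μ * (w + 1)) := by
    refine (hgap.and_eventually (eventually_ge_atTop T₀)).mono ?_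
    rintro T ⟨⟨hT0, hfar⟩, hT⟩
    obtain ⟨g, hdet, hgT, hge⟩ := hT₀ T hT
    calc 1 ≤ C * T * vnorm (act g x - y) ^ (w + 1) := hfar ⟨g, hdet⟩ hgT
      _ ≤ C * T * (T ^ (-μ)) ^ (w + 1) := by
        gcongr
        exact vnorm_nonneg _
      _ = C * T ^ (1 - μ * (w + 1)) := by
        rw [mul_assoc, ← Real.rpow_mul hT0.le, neg_mul, sub_eq_add_neg, Real.rpow_add hT0,
          Real.rpow_one]
  rw [le_div_iff₀ (by linarith)]
  linarith [nonneg_of_frequently_le_mul_rpow one_pos hfreq]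

lemma exists_mnorm_le_and_vnorm_le (hξ : Irrational (x 0 / x 1)) (hy : HasRationalDirection y)
    {W : ℝ} (hW0 : 0 ≤ W) (hW : W ∉ omegaSet (x 0 / x 1)) :
    ∃ C > 0, ∀ Y ≥ 1, ∃ γ : SL(2, ℤ),
      mnorm γ ≤ C * Y ^ (W + 1) ∧ vnorm (act γ x - y) ≤ C * Y⁻¹ := by
  obtain ⟨K, hK, hlow⟩ := exists_pos_le_rpow_mul_of_notMem_omegaSet hξ hW
  obtain ⟨C, hC, happ⟩ := exists_vnorm_le_abs_form hξ hy
  refine ⟨C * max K⁻¹ 1, by positivity, fun Y hY => ?_⟩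
  obtain ⟨c, d, hcop, hc, hcY, hεY⟩ :=
    exists_isCoprime_abs_le_and_abs_intCast_mul_add_le_inv (x 0 / x 1) hY
  obtain ⟨γ, he, hN⟩ := happ c d hcop hc (hεY.trans (inv_le_one_of_one_le₀ hY))
  set ε := |(c : ℝ) * (x 0 / x 1) + d|
  have hε : 0 < ε := abs_intCast_mul_add_pos hξ (by simp [hc])
  have hcε : |(c : ℝ)| / ε ≤ K⁻¹ * |(c : ℝ)| ^ (W + 1) := by
    rw [div_le_iff₀ hε, Real.rpow_add_one (by positivity), ← div_eq_inv_mul, div_mul_eq_mul_div,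
      le_div_iff₀ hK]
    calc |(c : ℝ)| * K ≤ |(c : ℝ)| * (|(c : ℝ)| ^ W * ε) := by gcongr; exact hlow c d hc
      _ = |(c : ℝ)| ^ W * |(c : ℝ)| * ε := by ring
  refine ⟨γ, ?_, ?_⟩
  · calc mnorm γ ≤ C * (|(c : ℝ)| / ε) := hN
      _ ≤ C * (K⁻¹ * |(c : ℝ)| ^ (W + 1)) := by gcongr
      _ ≤ C * (max K⁻¹ 1 * Y ^ (W + 1)) := by gcongr; exact le_max_left _ _
      _ = C * max K⁻¹ 1 * Y ^ (W + 1) := (mul_assoc _ _ _).symm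
  · calc vnorm (act γ x - y) ≤ C * ε := he
      _ ≤ C * (1 * Y⁻¹) := by rw [one_mul]; gcongr
      _ ≤ C * (max K⁻¹ 1 * Y⁻¹) := by gcongr; exact le_max_right _ _
      _ = C * max K⁻¹ 1 * Y⁻¹ := (mul_assoc _ _ _).symm

lemma mem_muHatSet_of_lt_one_div_add_one (hξ : Irrational (x 0 / x 1))
    (hy : HasRationalDirection y) {W : ℝ} (hW0 : 0 ≤ W) (hW : W ∉ omegaSet (x 0 / x 1)) {μ : ℝ}
    (hμ : μ < 1 / (W + 1)) : μ ∈ muHatSet x y := by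
  obtain ⟨C, hC, happ⟩ := exists_mnorm_le_and_vnorm_le hξ hy hW0 hW
  obtain ⟨T₀, hT₀⟩ := eventually_atTop.mp
    (eventually_mul_rpow_neg_le_rpow_neg (C * C ^ (1 / (W + 1))) hμ)
  refine ⟨max T₀ C, fun T hT => ?_⟩
  have hTC : C ≤ T := (le_max_right _ _).trans hT
  have hT0 : 0 < T := hC.trans_le hTC
  have hY : 1 ≤ (T / C) ^ (1 / (W + 1)) :=
    Real.one_le_rpow ((one_le_div hC).mpr hTC) (by positivity)
  obtain ⟨γ, hN, he⟩ := happ _ hY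
  refine ⟨γ, γ.det_coe, ?_, ?_⟩
  · rwa [one_div, Real.rpow_inv_rpow (by positivity) (by positivity),
      mul_div_cancel₀ _ hC.ne'] at hN
  · calc vnorm (act γ x - y) ≤ C * ((T / C) ^ (1 / (W + 1)))⁻¹ := he
      _ = C * C ^ (1 / (W + 1)) * T ^ (-(1 / (W + 1))) := by
        rw [Real.div_rpow hT0.le hC.le, inv_div, Real.rpow_neg hT0.le]
        ring
      _ ≤ T ^ (-μ) := hT₀ T ((le_max_left _ _).trans hT)

end Exponents

/-- for `x` with irrational slope `ξ`, `ω(ξ) < ∞`, and `y ≠ 0` of rational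
slope (or `y₂ = 0`): `μ(x, y) = ω(ξ)/(ω(ξ)+1)` and `μ̂(x, y) = 1/(ω(ξ)+1)`. -/
theorem stmt9 (x y : Fin 2 → ℝ) (hx2 : x 1 ≠ 0) (hξ : Irrational (x 0 / x 1))
    (w : ℝ) (hw : IsLUB (omegaSet (x 0 / x 1)) w)
    (hy : y ≠ 0) (hslope : y 1 = 0 ∨ ∃ r : ℚ, y 0 = (r : ℝ) * y 1) :
    IsLUB (muSet x y) (w / (w + 1)) ∧ IsLUB (muHatSet x y) (1 / (w + 1)) := by
  have hdir : HasRationalDirection y := hasRationalDirection_of_slope hy hslope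
  have hω : (1 : ℝ) ∈ omegaSet (x 0 / x 1) := one_mem_omegaSet hξ
  have hw0 : 0 < w := one_pos.trans_le (hw.1 hω)
  have hpos : ∀ᶠ z in 𝓝 w, 0 < z := lt_mem_nhds hw0
  have hmem : ∃ᶠ z in 𝓝 w, z ∈ omegaSet (x 0 / x 1) ∧ 0 < z :=
    (hw.frequently_nhds_mem ⟨1, hω⟩).and_eventually hpos
  have hnotMem : ∃ᶠ z in 𝓝 w, z ∉ omegaSet (x 0 / x 1) ∧ 0 < z :=
    ((frequently_gt_nhds w).mono fun z hz h => hz.not_ge (hw.1 h)).and_eventually hpos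
  have hμ : Tendsto (fun z => z / (z + 1)) (𝓝 w) (𝓝 (w / (w + 1))) :=
    tendsto_id.div (tendsto_id.add_const 1) (by positivity)
  have hμhat : Tendsto (fun z => 1 / (z + 1)) (𝓝 w) (𝓝 (1 / (w + 1))) :=
    tendsto_const_nhds.div (tendsto_id.add_const 1) (by positivity)
  exact ⟨isLUB_of_tendsto_of_frequently hμ
      (hnotMem.mono fun z hz ν hν => le_div_add_one_of_mem_muSet hξ hdir hz.2.le hz.1 hν)
      (hmem.mono fun z hz ν hν => mem_muSet_of_lt_div_add_one hξ hdir hz.2 hz.1 hν),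
    isLUB_of_tendsto_of_frequently hμhat
      (hmem.mono fun z hz ν hν => le_one_div_add_one_of_mem_muHatSet hξ hdir hz.2.le hz.1 hν)
      (hnotMem.mono fun z hz ν hν =>
        mem_muHatSet_of_lt_one_div_add_one hξ hdir hz.2.le hz.1 hν)⟩
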